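/- Let E be a finite type and ι a nonempty finite index type, and for each i ∈ ι let v i ∈ (ZMod 2)^E be the indicator vector of a subset f i ⊆ E. Suppose every e ∈ E belongs to exactly two of the sets f i, and suppose the graph on ι in which i and j (i ≠ j) are adjacent whenever f i ∩ f j ≠ ∅ is connected. Then for any coefficients c : ι → ZMod 2, the linear combination ∑_i c i • v i equals zero if and only if c is constant. In particular the span of {v i} over ZMod 2 has dimension |ι| − 1. -/

import Mathlib

/-!
At a point `e` lying in exactly `f i` and `f j`, the combination `∑ k, c k • 𝟙_{f k}` takes the
value `c i + c j`, which in characteristic two vanishes iff `c i = c j`. Hence the relations among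
the indicators are the functions that are constant along the edges of the intersection graph, and
connectedness leaves only the constants. A family whose relations are the constants becomes
independent once any single vector is dropped, while the dropped vector stays in the span of the
others; this gives the rank.
-/

section ConstantRelations

variable {R M ι : Type*} [Ring R] [AddCommGroup M] [Module R M] [Fintype ι] {v : ι → M}

theorem linearIndepOn_compl_singleton_of_sum_smul_eq_zero_imp
    (h : ∀ c : ι → R, ∑ i, c i • v i = 0 → ∀ i j, c i = c j) (i₀ : ι) :
    LinearIndepOn R v {i₀}ᶜ := by
  classical
  rw [← Finset.coe_singleton, ← Finset.coe_compl, linearIndepOn_finset_iff]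
  intro c hc i hi
  have hsum : ∑ k, Function.update c i₀ 0 k • v k = 0 := by
    rw [Fintype.sum_eq_add_sum_compl i₀, Function.update_self, zero_smul, zero_add, ← hc]
    refine Finset.sum_congr rfl fun k hk ↦ ?_
    rw [Function.update_of_ne (by simpa using hk)]
  have hconst : Function.update c i₀ 0 i = Function.update c i₀ 0 i₀ := h _ hsum i i₀
  rwa [Function.update_of_ne (by simpa using hi), Function.update_self] at hconst

theorem span_image_compl_singleton_eq_span_range_of_sum_eq_zero
    (h : ∑ i, v i = 0) (i₀ : ι) :
    Submodule.span R (v '' {i₀}ᶜ) = Submodule.span R (Set.range v) := by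
  classical
  have hmem : v i₀ ∈ Submodule.span R (v '' {i₀}ᶜ) := by
    rw [Fintype.sum_eq_add_sum_compl i₀, add_eq_zero_iff_eq_neg] at h
    rw [h]
    exact neg_mem <| sum_mem fun i hi ↦
      Submodule.subset_span <| Set.mem_image_of_mem v (by simpa using hi)
  rw [← Submodule.span_insert_eq_span hmem, ← Set.image_insert_eq, Set.insert_eq,
    Set.union_compl_self, Set.image_univ]

theorem finrank_span_range_of_sum_smul_eq_zero_iff [StrongRankCondition R] [Nonempty ι]
    (h : ∀ c : ι → R, ∑ i, c i • v i = 0 ↔ ∀ i j, c i = c j) :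
    Module.finrank R (Submodule.span R (Set.range v)) = Fintype.card ι - 1 := by
  classical
  have : Nontrivial R := nontrivial_of_invariantBasisNumber R
  obtain ⟨i₀⟩ := ‹Nonempty ι›
  have hsum : ∑ i, v i = 0 := by simpa using (h 1).2 fun _ _ ↦ rfl
  have hindep : LinearIndepOn R v {i₀}ᶜ :=
    linearIndepOn_compl_singleton_of_sum_smul_eq_zero_imp (fun c ↦ (h c).1) i₀
  rw [← span_image_compl_singleton_eq_span_range_of_sum_eq_zero hsum i₀, Set.image_eq_range,
    finrank_span_eq_card hindep, Fintype.card_compl_set, Set.card_singleton]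

end ConstantRelations

theorem forall_eq_iff_forall_adj_of_preconnected {V α : Type*} {G : SimpleGraph V}
    (hG : G.Preconnected) {c : V → α} : (∀ u w, c u = c w) ↔ ∀ u w, G.Adj u w → c u = c w := by
  refine ⟨fun h u w _ ↦ h u w, fun h u w ↦ ?_⟩
  obtain ⟨p⟩ := hG u w
  induction p with
  | nil => rfl
  | cons hadj _ ih => exact (h _ _ hadj).trans ih

/-- The intersection graph of a family of sets: distinct indices are adjacent when their sets
meet. For the boundary edge sets of the faces of a surface it is the face-adjacency graph. -/
def intersectionGraph {E ι : Type*} (f : ι → Set E) : SimpleGraph ι :=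
  SimpleGraph.fromRel fun i j ↦ (f i ∩ f j).Nonempty

theorem intersectionGraph_adj {E ι : Type*} {f : ι → Set E} {i j : ι} :
    (intersectionGraph f).Adj i j ↔ i ≠ j ∧ (f i ∩ f j).Nonempty := by
  rw [intersectionGraph, SimpleGraph.fromRel_adj, Set.inter_comm (f j), or_self]

section Indicator

variable {R E ι : Type*} [Fintype ι] {f : ι → Set E}

theorem sum_smul_indicator_one_apply_of_setOf_mem_eq_pair [Semiring R] {i j : ι} {e : E}
    (hij : i ≠ j) (he : {k | e ∈ f k} = {i, j}) (c : ι → R) :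
    (∑ k, c k • (f k).indicator (1 : E → R)) e = c i + c j := by
  classical
  have hmem (k : ι) : e ∈ f k ↔ k ∈ ({i, j} : Finset ι) := by
    simpa using Set.ext_iff.1 he k
  simp only [Finset.sum_apply, Pi.smul_apply, Set.indicator_apply, hmem, Pi.one_apply,
    smul_eq_mul, mul_ite, mul_one, mul_zero, Finset.sum_ite_mem, Finset.univ_inter,
    Finset.sum_pair hij]

theorem sum_smul_indicator_one_eq_zero_iff_forall_adj [Ring R] [CharP R 2]
    (h2 : ∀ e, {i | e ∈ f i}.ncard = 2) (c : ι → R) :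
    ∑ i, c i • (f i).indicator (1 : E → R) = 0 ↔
      ∀ i j, (intersectionGraph f).Adj i j → c i = c j := by
  constructor
  · intro h i j hadj
    obtain ⟨hij, e, hei, hej⟩ := intersectionGraph_adj.1 hadj
    have hsub : {i, j} ⊆ {k | e ∈ f k} := Set.pair_subset hei hej
    have he : {k | e ∈ f k} = {i, j} :=
      (Set.eq_of_subset_of_ncard_le hsub (by rw [h2, Set.ncard_pair hij])).symm
    rw [← CharTwo.add_eq_zero, ← sum_smul_indicator_one_apply_of_setOf_mem_eq_pair hij he c, h,
      Pi.zero_apply]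
  · intro h
    funext e
    obtain ⟨i, j, hij, he⟩ := Set.ncard_eq_two.1 (h2 e)
    have hei : e ∈ f i := he.ge (Set.mem_insert i {j})
    have hej : e ∈ f j := he.ge (Set.mem_insert_of_mem i rfl)
    have hadj : (intersectionGraph f).Adj i j := intersectionGraph_adj.2 ⟨hij, e, hei, hej⟩
    rw [sum_smul_indicator_one_apply_of_setOf_mem_eq_pair hij he, h i j hadj,
      CharTwo.add_self_eq_zero, Pi.zero_apply]

end Indicator

theorem indicator_unique_dependency_general {R E ι : Type*} [Ring R] [StrongRankCondition R]
    [CharP R 2] [Fintype ι] {f : ι → Set E} (h2 : ∀ e, {i | e ∈ f i}.ncard = 2)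
    (hconn : (intersectionGraph f).Connected) :
    (∀ c : ι → R, ∑ i, c i • (f i).indicator (1 : E → R) = 0 ↔ ∀ i j, c i = c j) ∧
    Module.finrank R (Submodule.span R (Set.range fun i ↦ (f i).indicator (1 : E → R))) =
      Fintype.card ι - 1 := by
  have := hconn.nonempty
  have hrel (c : ι → R) :
      ∑ i, c i • (f i).indicator (1 : E → R) = 0 ↔ ∀ i j, c i = c j :=
    (sum_smul_indicator_one_eq_zero_iff_forall_adj h2 c).trans
      (forall_eq_iff_forall_adj_of_preconnected hconn.preconnected).symm
  exact ⟨hrel, finrank_span_range_of_sum_smul_eq_zero_iff hrel⟩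

/-- If every element of `E` lies in exactly two of the sets `f i` and the adjacency
graph on `ι` (where `i ≠ j` are adjacent iff `f i ∩ f j ≠ ∅`) is connected, then a
`ZMod 2` linear combination of the indicator vectors vanishes iff the coefficients
are constant; in particular the span of the indicator vectors has dimension `|ι| - 1`. -/
theorem indicator_unique_dependency {E ι : Type*} [Fintype E] [Fintype ι]
    [DecidableEq E] [Nonempty ι]
    (f : ι → Finset E) (v : ι → E → ZMod 2)
    (hv : ∀ i e, v i e = if e ∈ f i then 1 else 0)
    (h2 : ∀ e : E, (Finset.univ.filter (fun i => e ∈ f i)).card = 2)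
    (hconn : (SimpleGraph.fromRel (fun i j => ((f i) ∩ (f j)).Nonempty)).Connected) :
    (∀ c : ι → ZMod 2, (∑ i, c i • v i) = 0 ↔ ∀ i j, c i = c j) ∧
    Module.finrank (ZMod 2) (Submodule.span (ZMod 2) (Set.range v)) =
      Fintype.card ι - 1 := by
  obtain rfl : v = fun i ↦ (f i : Set E).indicator 1 := by
    funext i e
    simp only [hv, Set.indicator_apply, SetLike.mem_coe, Pi.one_apply]
  refine indicator_unique_dependency_general (f := fun i ↦ (f i : Set E)) (fun e ↦ ?_) ?_
  · simpa only [← Set.ncard_coe_finset, Finset.coe_filter_univ, SetLike.mem_coe] using h2 e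
  · simpa only [intersectionGraph, ← Finset.coe_inter, Finset.coe_nonempty] using hconn
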